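/- Assume M : ℝ^d → ℝ is positive, twice continuously differentiable, satisfies C₁⟨v⟩^{−γ} ≤ M(v) ≤ C₂⟨v⟩^{−γ} for all v with γ > d/2, and |ΔM(v)/M(v)| ≤ C⟨v⟩^{−σ} for all v, for some σ ≥ 2 and C > 0. Let m : ℝ^d∖{0} → ℝ be twice continuously differentiable and suppose that for every s ≠ 0, λ^{−γ} M(λ^{−1}s) → m(s) as λ → 0⁺. For η > 0 define m_η(s) := η^{−γ/3} M(η^{−1/3} s). Then for every compact set Ω ⊂ ℝ^d∖{0}, ∫_Ω ( |m_η(s) − m(s)|² + |∇m_η(s) − ∇m(s)|² ) ds → 0 as η → 0⁺; that is, m_η converges to m in H¹(Ω). -/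

import Mathlib

open MeasureTheory Real Filter

noncomputable section

/-- The Laplacian on `ℝ^d`, as the sum of the second partial derivatives. -/
def lap {d : ℕ} (f : EuclideanSpace ℝ (Fin d) → ℝ) (v : EuclideanSpace ℝ (Fin d)) : ℝ :=
  ∑ i : Fin d, fderiv ℝ (fun w => fderiv ℝ f w (EuclideanSpace.single i (1 : ℝ))) v
    (EuclideanSpace.single i (1 : ℝ))

theorem aux_p {d : ℕ} {w : EuclideanSpace ℝ (Fin d) → ℝ} (hw : ContDiff ℝ 2 w)
    (v : EuclideanSpace ℝ (Fin d)) : ContDiff ℝ 1 (fun s => fderiv ℝ w s v) :=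
  (hw.fderiv_right (m := 1) (by norm_num)).clm_apply contDiff_const

theorem aux_pp {d : ℕ} {w : EuclideanSpace ℝ (Fin d) → ℝ} (hw : ContDiff ℝ 1 w)
    (v : EuclideanSpace ℝ (Fin d)) : Continuous (fun s => fderiv ℝ w s v) :=
  (hw.continuous_fderiv (by norm_num)).clm_apply continuous_const

theorem lap_cont {d : ℕ} {w : EuclideanSpace ℝ (Fin d) → ℝ} (hw : ContDiff ℝ 2 w) :
    Continuous (lap w) := by
  unfold lap
  exact continuous_finsetSum _ fun i _ => aux_pp (aux_p hw _) _

theorem lap_sub {d : ℕ} {u w : EuclideanSpace ℝ (Fin d) → ℝ} (hu : ContDiff ℝ 2 u)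
    (hw : ContDiff ℝ 2 w) (s) : lap (fun x => u x - w x) s = lap u s - lap w s := by
  unfold lap
  rw [← Finset.sum_sub_distrib]
  refine Finset.sum_congr rfl fun i _ => ?_
  have h1 : (fun x => fderiv ℝ (fun x => u x - w x) x (EuclideanSpace.single i (1 : ℝ))) =
      fun x => fderiv ℝ u x (EuclideanSpace.single i (1 : ℝ)) -
        fderiv ℝ w x (EuclideanSpace.single i (1 : ℝ)) := by
    funext x
    rw [fderiv_fun_sub (hu.differentiable (by norm_num) x) (hw.differentiable (by norm_num) x)]
    rfl
  rw [h1, fderiv_fun_sub ((aux_p hu _).differentiable (by norm_num) s)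
    ((aux_p hw _).differentiable (by norm_num) s)]
  rfl

theorem fderiv_scale {d : ℕ} {M : EuclideanSpace ℝ (Fin d) → ℝ} (hM : Differentiable ℝ M)
    (a b : ℝ) (s v) : fderiv ℝ (fun w => a * M (b • w)) s v = (a * b) * fderiv ℝ M (b • s) v := by
  have h1 : HasFDerivAt (fun w : EuclideanSpace ℝ (Fin d) => b • w)
      (b • ContinuousLinearMap.id ℝ (EuclideanSpace ℝ (Fin d))) s :=
    (hasFDerivAt_id s).const_smul b
  have h2 : HasFDerivAt (fun w => a * M (b • w)) _ s :=
    ((hM (b • s)).hasFDerivAt.comp s h1).const_mul a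
  rw [h2.fderiv]
  simp
  ring

theorem lap_scale {d : ℕ} {M : EuclideanSpace ℝ (Fin d) → ℝ} (hM : ContDiff ℝ 2 M)
    (a b : ℝ) (s) : lap (fun w => a * M (b • w)) s = (a * b ^ 2) * lap M (b • s) := by
  unfold lap
  rw [Finset.mul_sum]
  refine Finset.sum_congr rfl fun i _ => ?_
  simp_rw [fderiv_scale (hM.differentiable (by norm_num)) a b]
  rw [fderiv_scale ((aux_p hM _).differentiable (by norm_num)) (a * b) b]
  ring

theorem norm_sq_clm {d : ℕ} (L : EuclideanSpace ℝ (Fin d) →L[ℝ] ℝ) :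
    ‖L‖ ^ 2 = ∑ i, (L (EuclideanSpace.single i (1 : ℝ))) ^ 2 := by
  obtain ⟨y, rfl⟩ := (InnerProductSpace.toDual ℝ (EuclideanSpace ℝ (Fin d))).surjective L
  rw [LinearIsometryEquiv.norm_map, EuclideanSpace.norm_sq_eq]
  refine Finset.sum_congr rfl fun i _ => ?_
  simp [EuclideanSpace.inner_single_right]

theorem integral_fderiv_zero {d : ℕ} {F : EuclideanSpace ℝ (Fin d) → ℝ} (hF : ContDiff ℝ 1 F)
    (hc : HasCompactSupport F) (v : EuclideanSpace ℝ (Fin d)) :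
    ∫ s, fderiv ℝ F s v = 0 := by
  have h1 : Integrable (fun s => fderiv ℝ F s v) :=
    (aux_pp hF v).integrable_of_hasCompactSupport (hc.fderiv_apply (𝕜 := ℝ) v)
  have h2 : Integrable F := hF.continuous.integrable_of_hasCompactSupport hc
  have := integral_mul_fderiv_eq_neg_fderiv_mul_of_integrable (𝕜 := ℝ) (μ := volume)
    (f := fun _ : EuclideanSpace ℝ (Fin d) => (1 : ℝ)) (g := F) (v := v)
    (by simp) (by simpa using h1) (by simpa using h2) (fun x _ => differentiableAt_const _)
    (fun x _ => hF.differentiable (by norm_num) x)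
  simpa using this

theorem off_tsupport {d : ℕ} {χ : EuclideanSpace ℝ (Fin d) → ℝ} {s} (hs : s ∉ tsupport χ) :
    χ s = 0 ∧ (∀ v, fderiv ℝ χ s v = 0) ∧ lap χ s = 0 := by
  have h1 : ∀ v, (fun s => fderiv ℝ χ s v) s = 0 := fun v =>
    image_eq_zero_of_notMem_tsupport (f := fun s => fderiv ℝ χ s v)
      fun h => hs (tsupport_fderiv_apply_subset ℝ v h)
  refine ⟨image_eq_zero_of_notMem_tsupport hs, h1, ?_⟩
  unfold lap
  refine Finset.sum_eq_zero fun i _ => ?_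
  have := fun v => image_eq_zero_of_notMem_tsupport (f := fun x => fderiv ℝ (fun w => fderiv ℝ χ w
    (EuclideanSpace.single i (1 : ℝ))) x v) (x := s)
    fun h => hs (tsupport_fderiv_apply_subset ℝ _ (tsupport_fderiv_apply_subset ℝ v h))
  exact this _

theorem green {d : ℕ} {χ w : EuclideanSpace ℝ (Fin d) → ℝ} (hχ : ContDiff ℝ 2 χ)
    (hc : HasCompactSupport χ) (hw : ContDiff ℝ 2 w) :
    ∫ s, χ s * (w s ^ 2 + ‖fderiv ℝ w s‖ ^ 2) =
      ∫ s, (χ s * w s ^ 2 + (1 / 2) * w s ^ 2 * lap χ s - χ s * w s * lap w s) := by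
  have hχ1 := hχ.of_le (m := 1) (by norm_num)
  have hw1 := hw.of_le (m := 1) (by norm_num)
  let F : Fin d → EuclideanSpace ℝ (Fin d) → ℝ := fun i s =>
    χ s * w s * fderiv ℝ w s (EuclideanSpace.single i (1 : ℝ)) -
      (1 / 2) * w s ^ 2 * fderiv ℝ χ s (EuclideanSpace.single i (1 : ℝ))
  have hF : ∀ i, ContDiff ℝ 1 (F i) := fun i =>
    ((hχ1.mul hw1).mul (aux_p hw _)).sub ((contDiff_const.mul (hw1.pow 2)).mul (aux_p hχ _))
  have hFc : ∀ i, HasCompactSupport (F i) := fun i =>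
    HasCompactSupport.intro hc fun s hs => by
      simp [F, (off_tsupport hs).1, (off_tsupport hs).2.1]
  have hFd : ∀ i s, fderiv ℝ (F i) s (EuclideanSpace.single i (1 : ℝ)) =
      χ s * (fderiv ℝ w s (EuclideanSpace.single i (1 : ℝ))) ^ 2
      + χ s * w s * fderiv ℝ (fun x => fderiv ℝ w x (EuclideanSpace.single i (1 : ℝ))) s
        (EuclideanSpace.single i (1 : ℝ))
      - (1 / 2) * w s ^ 2 * fderiv ℝ (fun x => fderiv ℝ χ x (EuclideanSpace.single i (1 : ℝ))) s
        (EuclideanSpace.single i (1 : ℝ)) := by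
    intro i s
    have a1 := (hχ1.differentiable (by norm_num) s).hasFDerivAt
    have a2 := (hw1.differentiable (by norm_num) s).hasFDerivAt
    have a3 := ((aux_p hw (EuclideanSpace.single i (1 : ℝ))).differentiable
      (by norm_num) s).hasFDerivAt
    have a4 := ((aux_p hχ (EuclideanSpace.single i (1 : ℝ))).differentiable
      (by norm_num) s).hasFDerivAt
    have h : HasFDerivAt (F i) _ s :=
      ((a1.mul a2).mul a3).sub (((a2.pow 2).const_mul (1 / 2)).mul a4)
    rw [h.fderiv]
    simp
    ring
  have hsum : ∫ s, ∑ i, fderiv ℝ (F i) s (EuclideanSpace.single i (1 : ℝ)) = 0 := by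
    rw [integral_finsetSum _ fun i _ => (aux_pp (hF i) _).integrable_of_hasCompactSupport
      ((hFc i).fderiv_apply (𝕜 := ℝ) _)]
    exact Finset.sum_eq_zero fun i _ => integral_fderiv_zero (hF i) (hFc i) _
  have hfd : Continuous (fun s => fderiv ℝ w s) := hw1.continuous_fderiv (by norm_num)
  have hl1 := lap_cont hw
  have hl2 := lap_cont hχ
  have c1 := hχ.continuous
  have c2 := hw.continuous
  rw [← sub_eq_zero, ← integral_sub, ← hsum]
  · congr 1
    funext s
    simp_rw [hFd, norm_sq_clm]
    rw [Finset.sum_sub_distrib, Finset.sum_add_distrib, ← Finset.mul_sum, ← Finset.mul_sum,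
      ← Finset.mul_sum]
    unfold lap
    ring
  · refine Continuous.integrable_of_hasCompactSupport (by fun_prop)
      (HasCompactSupport.intro hc fun s hs => ?_)
    simp [(off_tsupport hs).1]
  · refine Continuous.integrable_of_hasCompactSupport (by fun_prop)
      (HasCompactSupport.intro hc fun s hs => ?_)
    simp [(off_tsupport hs).1, (off_tsupport hs).2.2]

theorem core {d : ℕ} {χ : EuclideanSpace ℝ (Fin d) → ℝ} (hχ : ContDiff ℝ 2 χ)
    (hc : HasCompactSupport χ) (hpos : ∀ s, 0 ≤ χ s)
    (w : ℝ → EuclideanSpace ℝ (Fin d) → ℝ) (hw : ∀ η, 0 < η → ContDiff ℝ 2 (w η)) (B D : ℝ)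
    (hB : ∀ η, 0 < η → ∀ s ∈ tsupport χ, |w η s| ≤ B ∧ |lap (w η) s| ≤ D)
    (hlim : ∀ s ∈ tsupport χ, Tendsto (fun η => w η s) (nhdsWithin 0 (Set.Ioi 0)) (nhds 0)) :
    Tendsto (fun η => ∫ s, χ s * (w η s ^ 2 + ‖fderiv ℝ (w η) s‖ ^ 2))
      (nhdsWithin 0 (Set.Ioi 0)) (nhds 0) := by
  have hev : ∀ᶠ η : ℝ in nhdsWithin 0 (Set.Ioi 0), 0 < η := self_mem_nhdsWithin
  have hl2 := lap_cont hχ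
  have c1 := hχ.continuous
  have key : Tendsto (fun η => ∫ s, (χ s * w η s ^ 2 + (1 / 2) * w η s ^ 2 * lap χ s
      - χ s * w η s * lap (w η) s)) (nhdsWithin 0 (Set.Ioi 0))
      (nhds (∫ s : EuclideanSpace ℝ (Fin d), (0 : ℝ))) := by
    refine tendsto_integral_filter_of_dominated_convergence
      (fun s => χ s * B ^ 2 + (1 / 2) * B ^ 2 * |lap χ s| + χ s * (B * D)) ?_ ?_ ?_ ?_
    · filter_upwards [hev] with η hη
      have hl1 := lap_cont (hw η hη)
      have c2 := (hw η hη).continuous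
      exact Continuous.aestronglyMeasurable (by fun_prop)
    · filter_upwards [hev] with η hη
      refine Eventually.of_forall fun s => ?_
      by_cases hs : s ∈ tsupport χ
      · obtain ⟨h1, h2⟩ := hB η hη s hs
        have hB0 : 0 ≤ B := (abs_nonneg _).trans h1
        have h3 : w η s ^ 2 ≤ B ^ 2 := sq_le_sq' (abs_le.1 h1).1 (abs_le.1 h1).2
        have h4 : |w η s| * |lap (w η) s| ≤ B * D := mul_le_mul h1 h2 (abs_nonneg _) hB0
        have h5 := hpos s
        rw [Real.norm_eq_abs]
        calc _ ≤ |χ s * w η s ^ 2| + |(1 / 2) * w η s ^ 2 * lap χ s|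
              + |χ s * w η s * lap (w η) s| := (abs_sub _ _).trans (by gcongr; exact abs_add_le _ _)
          _ = χ s * w η s ^ 2 + (1 / 2) * w η s ^ 2 * |lap χ s|
              + χ s * (|w η s| * |lap (w η) s|) := by
            simp [abs_mul, abs_of_nonneg h5, mul_assoc]
          _ ≤ _ := by gcongr
      · simp [(off_tsupport hs).1, (off_tsupport hs).2.2]
    · refine Continuous.integrable_of_hasCompactSupport (by fun_prop)
        (HasCompactSupport.intro hc fun s hs => ?_)
      simp [(off_tsupport hs).1, (off_tsupport hs).2.2]
    · refine Eventually.of_forall fun s => ?_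
      by_cases hs : s ∈ tsupport χ
      · have h0 := hlim s hs
        have h1 : Tendsto (fun η => χ s * w η s * lap (w η) s) (nhdsWithin 0 (Set.Ioi 0))
            (nhds 0) := by
          have h2 : Tendsto (fun η => |χ s| * |w η s| * D) (nhdsWithin 0 (Set.Ioi 0))
            (nhds 0) := by simpa using (h0.abs.const_mul |χ s|).mul_const D
          refine squeeze_zero_norm' ?_ h2
          filter_upwards [hev] with η hη
          rw [Real.norm_eq_abs, abs_mul, abs_mul]
          have := (hB η hη s hs).2
          gcongr
        have h3 := (((h0.pow 2).const_mul (χ s)).add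
          (((h0.pow 2).const_mul (1 / 2)).mul_const (lap χ s))).sub h1
        simpa using h3
      · simp [(off_tsupport hs).1, (off_tsupport hs).2.2]
  rw [integral_zero] at key
  refine key.congr' ?_
  filter_upwards [hev] with η hη
  exact (green hχ hc (hw η hη)).symm

theorem u_bound {d : ℕ} {γ C₂ σ C : ℝ} (hγ : 0 < γ) (hC₂ : 0 < C₂) (hσ : 2 ≤ σ) (hC : 0 < C)
    {M : EuclideanSpace ℝ (Fin d) → ℝ} (hMpos : ∀ v, 0 < M v) (hM : ContDiff ℝ 2 M)
    (hA1 : ∀ v, M v ≤ C₂ * Real.sqrt (1 + ‖v‖ ^ 2) ^ (-γ))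
    (hA5 : ∀ v, |lap M v / M v| ≤ C * Real.sqrt (1 + ‖v‖ ^ 2) ^ (-σ))
    {ρ : ℝ} (hρ : 0 < ρ) {l : ℝ} (hl : 0 < l) {s : EuclideanSpace ℝ (Fin d)} (hs : ρ ≤ ‖s‖) :
    |l ^ (-γ) * M (l⁻¹ • s)| ≤ C₂ * ρ ^ (-γ) ∧
    |lap (fun w => l ^ (-γ) * M (l⁻¹ • w)) s| ≤ C / ρ ^ 2 * (C₂ * ρ ^ (-γ)) := by
  have hlγ : 0 < l ^ (-γ) := rpow_pos_of_pos hl _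
  have hn : ‖l⁻¹ • s‖ = l⁻¹ * ‖s‖ := by
    rw [norm_smul, Real.norm_eq_abs, abs_of_pos (inv_pos.2 hl)]
  have hs0 : 0 < ‖s‖ := hρ.trans_le hs
  set v := l⁻¹ • s with hv
  have hq : l⁻¹ * ρ ≤ Real.sqrt (1 + ‖v‖ ^ 2) := by
    apply Real.le_sqrt_of_sq_le
    have : l⁻¹ * ρ ≤ ‖v‖ := by rw [hn]; gcongr
    have : (l⁻¹ * ρ) ^ 2 ≤ ‖v‖ ^ 2 := by gcongr
    linarith
  have hlρ : 0 < l⁻¹ * ρ := by positivity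
  have hb1 : l ^ (-γ) * M v ≤ C₂ * ρ ^ (-γ) := by
    calc l ^ (-γ) * M v ≤ l ^ (-γ) * (C₂ * (l⁻¹ * ρ) ^ (-γ)) := by
          gcongr
          refine (hA1 v).trans ?_
          refine mul_le_mul_of_nonneg_left ?_ hC₂.le
          exact rpow_le_rpow_of_nonpos hlρ hq (neg_nonpos.2 hγ.le)
      _ = (l ^ (-γ) * (l⁻¹) ^ (-γ)) * (C₂ * ρ ^ (-γ)) := by
          rw [mul_rpow (by positivity) hρ.le]; ring
      _ = _ := by
          rw [← mul_rpow hl.le (by positivity), mul_inv_cancel₀ hl.ne', one_rpow, one_mul]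
  have hu : 0 < l ^ (-γ) * M v := mul_pos hlγ (hMpos v)
  refine ⟨by rwa [abs_of_pos hu], ?_⟩
  rw [lap_scale hM, ← hv]
  have hS1 : 1 ≤ Real.sqrt (1 + ‖v‖ ^ 2) := by
    apply Real.le_sqrt_of_sq_le; nlinarith [sq_nonneg ‖v‖]
  have hb2 : |lap M v| ≤ C * (l⁻¹ * ρ) ^ (-2 : ℝ) * M v := by
    have := hA5 v
    rw [abs_div, abs_of_pos (hMpos v), div_le_iff₀ (hMpos v)] at this
    refine this.trans ?_
    have := (hMpos v).le
    gcongr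
    exact (rpow_le_rpow_of_exponent_le hS1 (by linarith)).trans
      (rpow_le_rpow_of_nonpos hlρ hq (by norm_num))
  rw [abs_mul, abs_of_pos (by positivity)]
  calc l ^ (-γ) * l⁻¹ ^ 2 * |lap M v|
      ≤ l ^ (-γ) * l⁻¹ ^ 2 * (C * (l⁻¹ * ρ) ^ (-2 : ℝ) * M v) := by gcongr
    _ = C / ρ ^ 2 * (l ^ (-γ) * M v) := by
        rw [rpow_neg hlρ.le, rpow_two]
        field_simp
    _ ≤ _ := by gcongr

/-- **`H¹`-convergence of the rescaled equilibrium on compact sets away from the origin**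
(Lemma 3.10 of the paper): under (A1), (A3) and (A5), the rescaled equilibrium
`m_η(s) := η^{-γ/3} M(η^{-1/3} s)` converges to `m` in `H¹(Ω)` for every compact
`Ω ⊂ ℝ^d ∖ {0}`. -/
theorem rescaled_equilibrium_H1_convergence (d : ℕ) (hd : 1 ≤ d) (γ C₁ C₂ σ C : ℝ)
    (hγ : (d : ℝ) / 2 < γ) (hC₁ : 0 < C₁) (hC₁₂ : C₁ ≤ C₂) (hσ : 2 ≤ σ) (hC : 0 < C)
    (M : EuclideanSpace ℝ (Fin d) → ℝ) (hMpos : ∀ v, 0 < M v) (hM : ContDiff ℝ 2 M)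
    (hA1 : ∀ v, C₁ * Real.sqrt (1 + ‖v‖ ^ 2) ^ (-γ) ≤ M v ∧
              M v ≤ C₂ * Real.sqrt (1 + ‖v‖ ^ 2) ^ (-γ))
    (hA5 : ∀ v, |lap M v / M v| ≤ C * Real.sqrt (1 + ‖v‖ ^ 2) ^ (-σ))
    (m : EuclideanSpace ℝ (Fin d) → ℝ)
    (hm : ContDiffOn ℝ 2 m {(0 : EuclideanSpace ℝ (Fin d))}ᶜ)
    (hA3 : ∀ s : EuclideanSpace ℝ (Fin d), s ≠ 0 →
      Tendsto (fun l : ℝ => l ^ (-γ) * M (l⁻¹ • s)) (nhdsWithin 0 (Set.Ioi 0))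
        (nhds (m s))) :
    ∀ Ω : Set (EuclideanSpace ℝ (Fin d)), IsCompact Ω →
      Ω ⊆ {(0 : EuclideanSpace ℝ (Fin d))}ᶜ →
      Tendsto (fun η : ℝ => ∫ s in Ω,
          ((η ^ (-γ / 3) * M ((η ^ (-(1 : ℝ) / 3)) • s) - m s) ^ 2 +
            ‖fderiv ℝ (fun w => η ^ (-γ / 3) * M ((η ^ (-(1 : ℝ) / 3)) • w)) s -
              fderiv ℝ m s‖ ^ 2))
        (nhdsWithin 0 (Set.Ioi 0)) (nhds 0) := by
  intro Ω hΩ hΩ0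
  have hγ0 : 0 < γ := lt_of_le_of_lt (by positivity) hγ
  have hC₂ : 0 < C₂ := hC₁.trans_le hC₁₂
  have hev : ∀ᶠ η : ℝ in nhdsWithin 0 (Set.Ioi 0), 0 < η := self_mem_nhdsWithin
  -- radii
  obtain ⟨R, hR0, hR⟩ : ∃ R : ℝ, 0 < R ∧ ∀ s ∈ Ω, ‖s‖ ≤ R := by
    obtain ⟨R, hR⟩ := hΩ.isBounded.exists_norm_le
    exact ⟨max R 1, by positivity, fun s hs => (hR s hs).trans (le_max_left _ _)⟩
  obtain ⟨r, hr0, hr⟩ : ∃ r : ℝ, 0 < r ∧ ∀ s ∈ Ω, 4 * r ≤ ‖s‖ := by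
    have h0 : (0 : EuclideanSpace ℝ (Fin d)) ∈ Ωᶜ := fun h => hΩ0 h rfl
    obtain ⟨ε, hε, hb⟩ := Metric.isOpen_iff.1 hΩ.isClosed.isOpen_compl 0 h0
    refine ⟨ε / 4, by positivity, fun s hs => ?_⟩
    by_contra hlt
    exact hb (by simp only [Metric.mem_ball, dist_zero_right]; linarith) hs
  -- cutoffs
  let f₁ : ContDiffBump (0 : EuclideanSpace ℝ (Fin d)) := ⟨r, 2 * r, hr0, by linarith⟩
  let f₂ : ContDiffBump (0 : EuclideanSpace ℝ (Fin d)) := ⟨2 * r, 3 * r, by linarith, by linarith⟩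
  let f₃ : ContDiffBump (0 : EuclideanSpace ℝ (Fin d)) := ⟨R, 2 * R, hR0, by linarith⟩
  let χ : EuclideanSpace ℝ (Fin d) → ℝ := fun s => f₃ s * (1 - f₂ s)
  let mt : EuclideanSpace ℝ (Fin d) → ℝ := fun s => (1 - f₁ s) * m s
  have hχ : ContDiff ℝ 2 χ := f₃.contDiff.mul (contDiff_const.sub f₂.contDiff)
  have hχc : HasCompactSupport χ := HasCompactSupport.mul_right f₃.hasCompactSupport
  have hχ0 : ∀ s, 0 ≤ χ s := fun s => mul_nonneg f₃.nonneg (sub_nonneg.2 f₂.le_one)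
  have hχ1 : ∀ s ∈ Ω, χ s = 1 := by
    intro s hs
    have e3 : f₃ s = 1 := f₃.one_of_mem_closedBall (by simpa using hR s hs)
    have e2 : f₂ s = 0 := f₂.zero_of_le_dist (by
      rw [dist_zero_right]; change 3 * r ≤ ‖s‖; linarith [hr s hs])
    simp [χ, e3, e2]
  have hsub : ∀ s ∈ tsupport χ, 2 * r ≤ ‖s‖ ∧ ‖s‖ ≤ 2 * R := by
    have hcl : IsClosed {s : EuclideanSpace ℝ (Fin d) | 2 * r ≤ ‖s‖ ∧ ‖s‖ ≤ 2 * R} :=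
      (isClosed_le continuous_const continuous_norm).inter
        (isClosed_le continuous_norm continuous_const)
    refine fun s hs => closure_minimal ?_ hcl hs
    intro x hx
    constructor
    · by_contra hlt
      apply hx
      have e2 : f₂ x = 1 := f₂.one_of_mem_closedBall (by
        rw [Metric.mem_closedBall, dist_zero_right]; exact (not_le.1 hlt).le)
      simp [χ, e2]
    · by_contra hlt
      apply hx
      have e3 : f₃ x = 0 := f₃.zero_of_le_dist (by
        rw [dist_zero_right]; exact (not_le.1 hlt).le)
      simp [χ, e3]
  have hmt : ContDiff ℝ 2 mt := by
    rw [contDiff_iff_contDiffAt]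
    intro s
    by_cases hs : s = 0
    · subst hs
      have : mt =ᶠ[nhds 0] fun _ => 0 := by
        filter_upwards [f₁.eventuallyEq_one] with x hx
        simp [mt, hx]
      exact contDiffAt_const.congr_of_eventuallyEq this
    · exact (contDiffAt_const.sub f₁.contDiffAt).mul
        (hm.contDiffAt (isOpen_compl_singleton.mem_nhds hs))
  have hmteq : ∀ s, 2 * r ≤ ‖s‖ → mt s = m s := by
    intro s hs
    have e1 : f₁ s = 0 := f₁.zero_of_le_dist (by rw [dist_zero_right]; exact hs)
    simp [mt, e1]
  have hmteq' : ∀ s ∈ Ω, mt =ᶠ[nhds s] m := by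
    intro s hs
    have : {x : EuclideanSpace ℝ (Fin d) | 2 * r < ‖x‖} ∈ nhds s :=
      (isOpen_lt continuous_const continuous_norm).mem_nhds (by
        change 2 * r < ‖s‖; linarith [hr s hs])
    filter_upwards [this] with x hx
    exact hmteq x (le_of_lt hx)
  let u : ℝ → EuclideanSpace ℝ (Fin d) → ℝ :=
    fun η w => η ^ (-γ / 3) * M ((η ^ (-(1 : ℝ) / 3)) • w)
  have hu : ∀ η, ContDiff ℝ 2 (u η) := fun η =>
    contDiff_const.mul (hM.comp (contDiff_const_smul _))
  have hul : ∀ η, 0 < η →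
      u η = fun w => (η ^ ((1 : ℝ) / 3)) ^ (-γ) * M ((η ^ ((1 : ℝ) / 3))⁻¹ • w) := by
    intro η hη
    funext w
    simp only [u]
    rw [← rpow_mul hη.le, ← rpow_neg hη.le]
    congr 2
    · ring
    · congr 2; ring
  have htl : Tendsto (fun η : ℝ => η ^ ((1 : ℝ) / 3)) (nhdsWithin 0 (Set.Ioi 0))
      (nhdsWithin 0 (Set.Ioi 0)) := by
    rw [tendsto_nhdsWithin_iff]
    constructor
    · have := (Real.continuousAt_rpow_const 0 ((1 : ℝ) / 3) (Or.inr (by norm_num))).tendsto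
      rw [zero_rpow (by norm_num)] at this
      exact this.mono_left nhdsWithin_le_nhds
    · filter_upwards [hev] with η hη
      exact rpow_pos_of_pos hη _
  have hulim : ∀ s, s ≠ 0 → Tendsto (fun η => u η s) (nhdsWithin 0 (Set.Ioi 0)) (nhds (m s)) := by
    intro s hs
    refine ((hA3 s hs).comp htl).congr' ?_
    filter_upwards [hev] with η hη
    rw [hul η hη]
    rfl
  obtain ⟨B₁, hB₁⟩ := (isCompact_closedBall (0 : EuclideanSpace ℝ (Fin d)) (2 * R)).exists_bound_of_continuousOn
    hmt.continuous.continuousOn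
  obtain ⟨D₁, hD₁⟩ := (isCompact_closedBall (0 : EuclideanSpace ℝ (Fin d)) (2 * R)).exists_bound_of_continuousOn
    (lap_cont hmt).continuousOn
  have hcore := core hχ hχc hχ0 (fun η s => u η s - mt s) (fun η _ => (hu η).sub hmt)
    (C₂ * (2 * r) ^ (-γ) + B₁) (C / (2 * r) ^ 2 * (C₂ * (2 * r) ^ (-γ)) + D₁) ?_ ?_
  rotate_left
  · intro η hη s hs
    obtain ⟨h1, h2⟩ := hsub s hs
    obtain ⟨h3, h4⟩ := u_bound hγ0 hC₂ hσ hC hMpos hM (fun v => (hA1 v).2) hA5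
      (ρ := 2 * r) (by linarith) (rpow_pos_of_pos hη ((1 : ℝ) / 3)) h1
    rw [← hul η hη] at h4
    have h3' : |u η s| ≤ C₂ * (2 * r) ^ (-γ) := by rw [hul η hη]; exact h3
    have hsb : s ∈ Metric.closedBall (0 : EuclideanSpace ℝ (Fin d)) (2 * R) := by simpa using h2
    refine ⟨(abs_sub _ _).trans (add_le_add h3' (hB₁ s hsb)), ?_⟩
    rw [lap_sub (hu η) hmt]
    exact (abs_sub _ _).trans (add_le_add h4 (hD₁ s hsb))
  · intro s hs
    obtain ⟨h1, h2⟩ := hsub s hs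
    have hs0 : s ≠ 0 := by
      rintro rfl
      rw [norm_zero] at h1
      linarith
    have := (hulim s hs0).sub_const (m s)
    rw [sub_self, ← hmteq s h1] at this
    exact this
  refine squeeze_zero' (Eventually.of_forall fun η => ?_) (Eventually.of_forall fun η => ?_) hcore
  · exact integral_nonneg fun s => by positivity
  have hcong : ∀ s ∈ Ω, ((η ^ (-γ / 3) * M ((η ^ (-(1 : ℝ) / 3)) • s) - m s) ^ 2 +
            ‖fderiv ℝ (fun w => η ^ (-γ / 3) * M ((η ^ (-(1 : ℝ) / 3)) • w)) s -
              fderiv ℝ m s‖ ^ 2) =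
      χ s * ((u η s - mt s) ^ 2 + ‖fderiv ℝ (fun x => u η x - mt x) s‖ ^ 2) := by
    intro s hs
    rw [hχ1 s hs, one_mul, (hmteq' s hs).eq_of_nhds,
      fderiv_fun_sub ((hu η).differentiable (by norm_num) s) (hmt.differentiable (by norm_num) s),
      (hmteq' s hs).fderiv_eq]
  rw [setIntegral_congr_fun hΩ.measurableSet hcong]
  refine setIntegral_le_integral ?_ (Eventually.of_forall fun s => ?_)
  · have hd2 := (hu η).sub hmt
    have hfd : Continuous (fun s => fderiv ℝ (fun x => u η x - mt x) s) :=
      hd2.continuous_fderiv (by norm_num)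
    have c0 := hχ.continuous
    have c1 := (hu η).continuous
    have c2 := hmt.continuous
    refine Continuous.integrable_of_hasCompactSupport (by fun_prop)
      (HasCompactSupport.intro hχc fun s hs => ?_)
    simp [(off_tsupport hs).1]
  · exact mul_nonneg (hχ0 s) (by positivity)
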